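/- Let α, β > 0 and μ ≥ 0 with α − β(μ+1) < −1. Then Σ_{n=2}^∞ (log n!)^α / ((log n!)^β + r²)^{μ+1} divided by ( C · r^{2(α+1)/β − 2(μ+1)} / log r ) tends to 1 as r → ∞, where C := Γ(μ + 1 − (α+1)/β) · Γ((α+1)/β) / (2·Γ(μ+1)). -/

import Mathlib

open Filter Real
namespace MathieuAux
open MeasureTheory Set Topology

noncomputable def L (n : ℕ) : ℝ := Real.log (((n + 2).factorial : ℝ))

lemma L_pos (n : ℕ) : 0 < L n := by
  apply Real.log_pos
  have : 2 ≤ (n+2).factorial := le_trans (by simp) (Nat.self_le_factorial (n+2))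
  exact_mod_cast this

lemma L_le (n : ℕ) : L n ≤ ((n:ℝ)+2) * Real.log ((n:ℝ)+2) := by
  have h : (((n+2).factorial : ℕ):ℝ) ≤ (((n+2)^(n+2) : ℕ):ℝ) := by
    exact_mod_cast Nat.factorial_le_pow (n+2)
  have := Real.log_le_log (by positivity) h
  push_cast at this
  rw [Real.log_pow] at this
  push_cast at this
  exact this

lemma le_L (n : ℕ) : ((n:ℝ)+2) * Real.log ((n:ℝ)+2) - ((n:ℝ)+2) ≤ L n := by
  have h := Stirling.le_log_factorial_stirling (n := n+2) (by omega)
  push_cast at h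
  have h1 : 0 ≤ Real.log ((n:ℝ)+2) := Real.log_nonneg (by linarith [(Nat.cast_nonneg n : (0:ℝ) ≤ n)])
  have h2 : 0 ≤ Real.log (2*π) := Real.log_nonneg (by linarith [Real.pi_gt_three])
  unfold L
  linarith

lemma tendsto_natcast2 : Tendsto (fun n : ℕ => (n:ℝ)+2) atTop atTop :=
  tendsto_atTop_add_const_right _ _ tendsto_natCast_atTop_atTop

lemma L_ratio : Tendsto (fun n : ℕ => L n / (((n:ℝ)+2) * Real.log ((n:ℝ)+2))) atTop (𝓝 1) := by
  have hl : Tendsto (fun n : ℕ => 1 - (Real.log ((n:ℝ)+2))⁻¹) atTop (𝓝 1) := by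
    have := (tendsto_inv_atTop_zero.comp (Real.tendsto_log_atTop.comp tendsto_natcast2)).const_sub (1:ℝ)
    simpa using this
  refine tendsto_of_tendsto_of_tendsto_of_le_of_le hl tendsto_const_nhds ?_ ?_
  · intro n
    have h0 : (0:ℝ) < (n:ℝ)+2 := by positivity
    have h1 : 0 < Real.log ((n:ℝ)+2) := Real.log_pos (by linarith [(Nat.cast_nonneg n : (0:ℝ) ≤ n)])
    simp only
    rw [le_div_iff₀ (by positivity)]
    have := le_L n
    field_simp
    linarith
  · intro n
    have h0 : (0:ℝ) < (n:ℝ)+2 := by positivity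
    have h1 : 0 < Real.log ((n:ℝ)+2) := Real.log_pos (by linarith [(Nat.cast_nonneg n : (0:ℝ) ≤ n)])
    simp only
    rw [div_le_one (by positivity)]
    exact L_le n

lemma loglog : Tendsto (fun R : ℝ => Real.log (Real.log R) / Real.log R) atTop (𝓝 0) := by
  have h : Tendsto (fun x : ℝ => Real.log x / x) atTop (𝓝 0) := by
    have := Real.isLittleO_log_id_atTop.tendsto_div_nhds_zero
    simpa using this
  exact h.comp Real.tendsto_log_atTop

lemma K_tendsto : Tendsto (fun R : ℝ => R / Real.log R) atTop atTop := by
  have h : Tendsto (fun x : ℝ => Real.log x / x) atTop (𝓝[>] 0) := by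
    rw [tendsto_nhdsWithin_iff]
    constructor
    · have := Real.isLittleO_log_id_atTop.tendsto_div_nhds_zero
      simpa using this
    · filter_upwards [eventually_gt_atTop 1] with x hx
      exact div_pos (Real.log_pos hx) (by linarith)
  have := tendsto_inv_nhdsGT_zero.comp h
  refine this.congr fun x => ?_
  simp

lemma logK_ratio : Tendsto (fun R : ℝ => Real.log (R / Real.log R) / Real.log R) atTop (𝓝 1) := by
  have := loglog.const_sub 1
  rw [sub_zero] at this
  refine this.congr' ?_
  filter_upwards [eventually_gt_atTop 1] with R hR
  have h := Real.log_pos hR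
  rw [Real.log_div (by linarith) h.ne', sub_div, div_self h.ne']

lemma pointwise (s : ℝ) (hs : 0 < s) :
    Tendsto (fun R : ℝ => L ⌊s * (R / Real.log R)⌋₊ / R) atTop (𝓝 s) := by
  have hsK : Tendsto (fun R : ℝ => s * (R / Real.log R)) atTop atTop :=
    K_tendsto.const_mul_atTop hs
  have hm : Tendsto (fun R : ℝ => ⌊s * (R / Real.log R)⌋₊) atTop atTop :=
    tendsto_nat_floor_atTop.comp hsK
  have h1 := L_ratio.comp hm
  have h2 : Tendsto (fun R : ℝ => ((⌊s * (R / Real.log R)⌋₊ : ℝ) + 2) / (R / Real.log R)) atTop (𝓝 s) := by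
    have a := (tendsto_nat_floor_mul_div_atTop (R := ℝ) hs.le).comp K_tendsto
    have b := (tendsto_inv_atTop_zero.comp K_tendsto).const_mul (2:ℝ)
    have := a.add b
    rw [mul_zero, add_zero] at this
    refine this.congr fun R => ?_
    simp only [Function.comp]
    ring
  have h3 : Tendsto (fun R : ℝ => Real.log ((⌊s * (R / Real.log R)⌋₊ : ℝ) + 2) / Real.log R) atTop (𝓝 1) := by
    have a : Tendsto (fun R : ℝ => Real.log (((⌊s * (R / Real.log R)⌋₊ : ℝ) + 2) / (R / Real.log R)) * (Real.log R)⁻¹) atTop (𝓝 (Real.log s * 0)) :=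
      (h2.log hs.ne').mul (tendsto_inv_atTop_zero.comp Real.tendsto_log_atTop)
    have := a.add logK_ratio
    rw [mul_zero, zero_add] at this
    refine this.congr' ?_
    filter_upwards [eventually_gt_atTop 1] with R hR
    have h := Real.log_pos hR
    have hK : 0 < R / Real.log R := by positivity
    rw [Real.log_div (by positivity) hK.ne']
    ring
  have := (h1.mul h2).mul h3
  rw [one_mul, mul_one] at this
  refine this.congr' ?_
  filter_upwards [eventually_gt_atTop 1] with R hR
  have h := Real.log_pos hR
  simp only [Function.comp]
  set m := ⌊s * (R / Real.log R)⌋₊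
  have h1 : 0 < Real.log ((m:ℝ)+2) := Real.log_pos (by linarith [(Nat.cast_nonneg m : (0:ℝ) ≤ m)])
  field_simp

lemma lower : ∀ᶠ R : ℝ in atTop, ∀ s : ℝ, 1 ≤ s → s / 4 ≤ L ⌊s * (R / Real.log R)⌋₊ / R := by
  have h1 : ∀ᶠ n : ℕ in atTop, (1/2:ℝ) ≤ L n / (((n:ℝ)+2) * Real.log ((n:ℝ)+2)) :=
    (L_ratio.eventually (lt_mem_nhds (by norm_num : (1/2:ℝ) < 1))).mono fun _ h => h.le
  obtain ⟨N, hN⟩ := eventually_atTop.1 h1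
  have h2 : ∀ᶠ R : ℝ in atTop, (1/2:ℝ) ≤ Real.log (R / Real.log R) / Real.log R :=
    (logK_ratio.eventually (lt_mem_nhds (by norm_num : (1/2:ℝ) < 1))).mono fun _ h => h.le
  filter_upwards [h2, eventually_gt_atTop 1, K_tendsto.eventually_ge_atTop (N:ℝ), K_tendsto.eventually_ge_atTop 1] with R hR hR1 hRN hRK s hs
  have hl := Real.log_pos hR1
  set K := R / Real.log R with hK
  have hsK : K ≤ s * K := by nlinarith
  have hm : N ≤ ⌊s * K⌋₊ := Nat.le_floor (by linarith)
  have hb := hN _ hm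
  have hf := Nat.lt_floor_add_one (s * K)
  set m := ⌊s * K⌋₊
  have hm0 : (0:ℝ) ≤ m := Nat.cast_nonneg m
  have h1 : 0 < Real.log ((m:ℝ)+2) := Real.log_pos (by linarith)
  rw [le_div_iff₀ (by positivity)] at hb hR
  have h3 : Real.log K ≤ Real.log ((m:ℝ)+2) := Real.log_le_log (by linarith) (by linarith)
  rw [le_div_iff₀ (by linarith)]
  have h4 : s * K * (1/2 * Real.log R) ≤ ((m:ℝ)+2) * Real.log ((m:ℝ)+2) :=
    mul_le_mul (by linarith) (by linarith) (by linarith) (by linarith)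
  have h5 : K * Real.log R = R := by rw [hK]; field_simp
  have h6 : s * K * (1/2 * Real.log R) = s / 2 * R := by linear_combination (s/2) * h5
  linarith

noncomputable def G (α β μ t : ℝ) : ℝ := t ^ α / (t ^ β + 1) ^ (μ + 1)

lemma G_nonneg {α β μ t : ℝ} (ht : 0 ≤ t) : 0 ≤ G α β μ t := by
  unfold G; positivity

lemma G_le_one {α β μ t : ℝ} (hα : 0 < α) (hμ : 0 ≤ μ) (ht : 0 ≤ t) (h1 : t ≤ 1) : G α β μ t ≤ 1 := by
  unfold G
  apply div_le_one_of_le₀ _ (by positivity)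
  calc t ^ α ≤ 1 := Real.rpow_le_one ht h1 hα.le
    _ ≤ _ := Real.one_le_rpow (by linarith [Real.rpow_nonneg ht β]) (by linarith)

lemma G_le_rpow {α β μ t : ℝ} (hμ : 0 ≤ μ) (ht : 0 < t) : 
    G α β μ t ≤ t ^ (-(β * (μ+1) - α)) := by
  unfold G
  rw [div_le_iff₀ (by positivity)]
  calc t ^ α = t ^ (-(β * (μ+1) - α)) * (t ^ β) ^ (μ+1) := by
        rw [← Real.rpow_mul ht.le, ← Real.rpow_add ht]; congr 1; ring
    _ ≤ _ := by
        gcongr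
        linarith

lemma G_bound {α β μ : ℝ} (hα : 0 < α) (hμ : 0 ≤ μ) (hp : 1 < β * (μ+1) - α) {s t : ℝ} (hs : 0 < s)
    (ht : 0 < t) (hst : 1 ≤ s → s / 4 ≤ t) :
    G α β μ t ≤ 8 ^ (β * (μ+1) - α) * (1 + ‖s‖) ^ (-(β * (μ+1) - α)) := by
  set p := β * (μ+1) - α
  have e : (8:ℝ) ^ p * (1 + ‖s‖) ^ (-p) = ((1+s)/8) ^ (-p) := by
    rw [Real.norm_of_nonneg hs.le, Real.div_rpow (by linarith) (by norm_num), Real.rpow_neg (by norm_num : (0:ℝ) ≤ 8)]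
    field_simp
  rw [e]
  rcases le_total 1 s with h | h
  · have := hst h
    refine (G_le_rpow hμ ht).trans ?_
    exact Real.rpow_le_rpow_of_nonpos (by positivity) (by linarith) (by linarith)
  · have : 1 ≤ ((1+s)/8) ^ (-p) :=
      Real.one_le_rpow_of_pos_of_le_one_of_nonpos (by positivity) (by linarith) (by linarith)
    refine le_trans ?_ this
    rcases le_total t 1 with h' | h'
    · exact G_le_one hα hμ ht.le h'
    · exact (G_le_rpow hμ ht).trans (Real.rpow_le_one_of_one_le_of_nonpos h' (by linarith))

lemma sum_eq_integral (f : ℕ → ℝ) (hf : IntegrableOn (fun y : ℝ => f ⌊y⌋₊) (Ioi 0)) :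
    ∑' n, f n = ∫ y in Ioi (0:ℝ), f ⌊y⌋₊ := by
  have hU : (⋃ n : ℕ, Ico (n:ℝ) (n+1)) = Ici 0 := by
    ext x
    simp only [mem_iUnion, mem_Ico, mem_Ici]
    constructor
    · rintro ⟨n, h, _⟩
      exact le_trans (Nat.cast_nonneg n) h
    · intro h
      exact ⟨⌊x⌋₊, Nat.floor_le h, Nat.lt_floor_add_one x⟩
  have hd : Pairwise (Function.onFun Disjoint (fun n : ℕ => Ico (n:ℝ) (n+1))) := by
    intro i j hij
    rw [Function.onFun, Set.disjoint_left]
    intro x hi hj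
    apply hij
    rw [mem_Ico] at hi hj
    have a : (i:ℝ) < j + 1 := by linarith
    have b : (j:ℝ) < i + 1 := by linarith
    norm_cast at a b
    omega
  have := hasSum_integral_iUnion (μ := volume) (f := fun y : ℝ => f ⌊y⌋₊) (fun n : ℕ => measurableSet_Ico) hd
    (by rw [hU]; rw [integrableOn_Ici_iff_integrableOn_Ioi]; exact hf)
  rw [hU, integral_Ici_eq_integral_Ioi] at this
  rw [← this.tsum_eq]
  congr 1
  ext n
  rw [setIntegral_congr_fun (g := fun _ => f n) measurableSet_Ico]
  · simp
  · intro y hy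
    have : ⌊y⌋₊ = n := (Nat.floor_eq_iff (le_trans (Nat.cast_nonneg n) hy.1)).2 hy
    simp [this]

lemma main_lim {α β μ : ℝ} (hα : 0 < α) (hβ : 0 < β) (hμ : 0 ≤ μ) (hp : 1 < β * (μ+1) - α) :
    Tendsto (fun R : ℝ => (R / Real.log R)⁻¹ * ∑' n, G α β μ (L n / R)) atTop
      (𝓝 (∫ s in Ioi (0:ℝ), G α β μ s)) := by
  have hmeas : ∀ R : ℝ, Measurable (fun s : ℝ => G α β μ (L ⌊s * (R / Real.log R)⌋₊ / R)) := by
    intro R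
    have : Measurable (fun n : ℕ => G α β μ (L n / R)) := measurable_from_top
    exact this.comp (Nat.measurable_floor.comp (measurable_id.mul_const _))
  have hbi : Integrable (fun s : ℝ => (8:ℝ) ^ (β * (μ+1) - α) * (1 + ‖s‖) ^ (-(β * (μ+1) - α)))
      (volume.restrict (Ioi 0)) :=
    ((integrable_one_add_norm (by simpa using hp)).const_mul _).restrict
  have hbd : ∀ᶠ R : ℝ in atTop, ∀ᵐ s ∂(volume.restrict (Ioi (0:ℝ))),
      ‖G α β μ (L ⌊s * (R / Real.log R)⌋₊ / R)‖ ≤ 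
        (8:ℝ) ^ (β * (μ+1) - α) * (1 + ‖s‖) ^ (-(β * (μ+1) - α)) := by
    filter_upwards [lower, eventually_gt_atTop 0] with R hR hR0
    filter_upwards [ae_restrict_mem measurableSet_Ioi] with s hs
    have ht : 0 < L ⌊s * (R / Real.log R)⌋₊ / R := div_pos (L_pos _) hR0
    rw [Real.norm_of_nonneg (G_nonneg ht.le)]
    exact G_bound hα hμ hp hs ht (hR s)
  have key : Tendsto (fun R : ℝ => ∫ s in Ioi (0:ℝ), G α β μ (L ⌊s * (R / Real.log R)⌋₊ / R)) atTop
      (𝓝 (∫ s in Ioi (0:ℝ), G α β μ s)) := by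
    refine tendsto_integral_filter_of_dominated_convergence _ 
      (Eventually.of_forall fun R => (hmeas R).aestronglyMeasurable) hbd hbi ?_
    filter_upwards [ae_restrict_mem measurableSet_Ioi] with s hs
    have hs : 0 < s := hs
    have hc : ContinuousAt (G α β μ) s := by
      unfold G
      have : s ^ β + 1 ≠ 0 := by positivity
      refine ContinuousAt.div (Real.continuousAt_rpow_const _ _ (Or.inl hs.ne')) ?_ (by positivity)
      exact ((Real.continuousAt_rpow_const _ _ (Or.inl hs.ne')).add continuousAt_const).rpow_const (Or.inl this)
    exact hc.tendsto.comp (pointwise s hs)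
  refine key.congr' ?_
  filter_upwards [hbd, eventually_gt_atTop 1] with R hR hR1
  have hl := Real.log_pos hR1
  have hK : 0 < R / Real.log R := by positivity
  have hi : IntegrableOn (fun s : ℝ => G α β μ (L ⌊s * (R / Real.log R)⌋₊ / R)) (Ioi 0) :=
    Integrable.mono' hbi (hmeas R).aestronglyMeasurable hR
  have hi2 := (integrableOn_Ioi_comp_mul_right_iff (fun y : ℝ => G α β μ (L ⌊y⌋₊ / R)) 0 hK).1 hi
  rw [zero_mul] at hi2
  rw [sum_eq_integral (fun n => G α β μ (L n / R)) hi2,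
    integral_comp_mul_right_Ioi (fun y : ℝ => G α β μ (L ⌊y⌋₊ / R)) 0 hK, zero_mul, smul_eq_mul]

lemma beta_real {a b : ℝ} (ha : 0 < a) (hb : 0 < b) :
    ∫ u in Ioo (0:ℝ) 1, u ^ (a-1) * (1-u) ^ (b-1) = Real.Gamma a * Real.Gamma b / Real.Gamma (a+b) := by
  have h := ProbabilityTheory.beta_eq_betaIntegralReal a b ha hb
  rw [ProbabilityTheory.beta] at h
  rw [h, Complex.betaIntegral, intervalIntegral.integral_of_le zero_le_one,
    ← integral_Ioc_eq_integral_Ioo, ← Complex.ofReal_re (∫ u in Ioc (0:ℝ) 1, _), ← integral_complex_ofReal]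
  congr 1
  apply setIntegral_congr_fun measurableSet_Ioc
  intro u hu
  simp only
  rw [Complex.ofReal_mul, Complex.ofReal_cpow hu.1.le, Complex.ofReal_cpow (by linarith [hu.2])]
  push_cast
  rfl

lemma beta_Ioi {a b : ℝ} (ha : 0 < a) (hb : 0 < b) :
    ∫ x in Ioi (0:ℝ), x ^ (a-1) / (x+1) ^ (a+b) = Real.Gamma a * Real.Gamma b / Real.Gamma (a+b) := by
  rw [← beta_real ha hb]
  have him : (fun u : ℝ => u / (1-u)) '' Ioo 0 1 = Ioi 0 := by
    ext x
    simp only [mem_image, mem_Ioo, mem_Ioi]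
    constructor
    · rintro ⟨u, ⟨h0, h1⟩, rfl⟩
      exact div_pos h0 (by linarith)
    · intro hx
      refine ⟨x/(1+x), ⟨by positivity, by rw [div_lt_one (by positivity)]; linarith⟩, ?_⟩
      have : 1 - x/(1+x) = 1/(1+x) := by field_simp; ring
      rw [this]; field_simp
  rw [← him, integral_image_eq_integral_abs_deriv_smul (f' := fun u => 1/(1-u)^2) measurableSet_Ioo]
  · apply setIntegral_congr_fun measurableSet_Ioo
    intro u hu
    have h0 : 0 < u := hu.1
    have h1 : 0 < 1 - u := by linarith [hu.2]
    have h2 : u / (1-u) + 1 = (1-u)⁻¹ := by field_simp; ring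
    simp only [smul_eq_mul]
    rw [h2, abs_of_pos (by positivity), Real.div_rpow h0.le h1.le, Real.inv_rpow h1.le]
    have e : (1-u) ^ (a+b) = (1-u)^(b-1) * ((1-u)^(a-1) * (1-u)^2) := by
      rw [← Real.rpow_natCast (1-u) 2, ← Real.rpow_add h1, ← Real.rpow_add h1]
      congr 1; push_cast; ring
    rw [div_inv_eq_mul, e]
    have : (1-u)^(a-1) ≠ 0 := by positivity
    field_simp
  · intro u hu
    have h1 : 1 - u ≠ 0 := by linarith [hu.2]
    have := ((hasDerivAt_id u).div ((hasDerivAt_id u).const_sub 1) h1).hasDerivWithinAt (s := Ioo 0 1)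
    have e : (1 * (1 - id u) - id u * -1) / (1 - id u) ^ 2 = 1 / (1-u)^2 := by simp
    rw [e] at this
    exact this
  · intro u hu v hv h
    have h1 : 1 - u ≠ 0 := by linarith [hu.2]
    have h2 : 1 - v ≠ 0 := by linarith [hv.2]
    change u / (1-u) = v / (1-v) at h
    rw [div_eq_div_iff h1 h2] at h
    linarith

lemma G_integral {α β μ : ℝ} (hα : 0 < α) (hβ : 0 < β) (hp : 1 < β * (μ+1) - α) :
    ∫ s in Ioi (0:ℝ), G α β μ s =
      β⁻¹ * (Real.Gamma (μ + 1 - (α + 1) / β) * Real.Gamma ((α + 1) / β) / Real.Gamma (μ + 1)) := by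
  have hb : 0 < μ + 1 - (α+1)/β := by
    rw [sub_pos, div_lt_iff₀ hβ]; linarith
  have h := beta_Ioi (a := (α+1)/β) (b := μ + 1 - (α+1)/β) (by positivity) hb
  have e : (α+1)/β + (μ + 1 - (α+1)/β) = μ + 1 := by ring
  rw [e] at h
  rw [mul_comm (Real.Gamma (μ + 1 - (α + 1) / β)), ← h, ← integral_comp_rpow_Ioi_of_pos
      (g := fun x : ℝ => x ^ ((α+1)/β - 1) / (x+1) ^ (μ+1)) hβ,
    ← integral_const_mul]
  apply setIntegral_congr_fun measurableSet_Ioi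
  intro x hx
  have hx : 0 < x := hx
  simp only [smul_eq_mul, G]
  have : x ^ α = x ^ (β-1) * (x ^ β) ^ ((α+1)/β - 1) := by
    rw [← Real.rpow_mul hx.le, ← Real.rpow_add hx]
    congr 1
    field_simp
    ring
  rw [this]
  field_simp

end MathieuAux

/-- Corollary 6.1: asymptotics of the Mathieu-type series built from the
sequence `log n!`:
`∑_{n=2}^∞ (log n!)^α / ((log n!)^β + r²)^{μ+1}
  ∼ C r^{2(α+1)/β − 2(μ+1)} / log r` with
`C = Γ(μ+1−(α+1)/β) Γ((α+1)/β) / (2 Γ(μ+1))`. -/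
theorem mathieu_log_factorial_asymptotics
    (α β μ : ℝ) (hα : 0 < α) (hβ : 0 < β) (hμ : 0 ≤ μ)
    (hconv : α - β * (μ + 1) < -1) :
    Filter.Tendsto
      (fun r : ℝ =>
        (∑' n : ℕ,
          (Real.log (((n + 2).factorial : ℝ))) ^ α /
            ((Real.log (((n + 2).factorial : ℝ))) ^ β + r ^ 2) ^ (μ + 1)) /
        ((Real.Gamma (μ + 1 - (α + 1) / β) * Real.Gamma ((α + 1) / β) /
            (2 * Real.Gamma (μ + 1))) *
          r ^ (2 * (α + 1) / β - 2 * (μ + 1)) / Real.log r))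
      Filter.atTop (nhds 1) := by
  have hp : 1 < β * (μ+1) - α := by linarith
  have hb : 0 < μ + 1 - (α+1)/β := by
    rw [sub_pos, div_lt_iff₀ hβ]; linarith
  have hlim := MathieuAux.main_lim hα hβ hμ hp
  rw [MathieuAux.G_integral hα hβ hp] at hlim
  have g1 := Real.Gamma_pos_of_pos hb
  have g2 := Real.Gamma_pos_of_pos (show 0 < (α+1)/β by positivity)
  have g3 := Real.Gamma_pos_of_pos (show 0 < μ+1 by positivity)
  set A := Real.Gamma (μ + 1 - (α + 1) / β)
  set B := Real.Gamma ((α + 1) / β)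
  set D := Real.Gamma (μ + 1)
  have hR : Tendsto (fun r : ℝ => r ^ (2/β)) atTop atTop := tendsto_rpow_atTop (by positivity)
  have h2 := (hlim.comp hR).div_const (β⁻¹ * (A * B / D))
  rw [div_self (by positivity)] at h2
  refine h2.congr' ?_
  filter_upwards [eventually_gt_atTop 1] with r hr
  have hr0 : 0 < r := by linarith
  have hl := Real.log_pos hr
  set R := r ^ (2/β) with hRdef
  have hRpos : 0 < R := by positivity
  have hRβ : R ^ β = r ^ 2 := by
    rw [hRdef, ← Real.rpow_mul hr0.le, div_mul_cancel₀ _ hβ.ne']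
    exact_mod_cast Real.rpow_natCast r 2
  have hsum : (∑' n : ℕ,
          (Real.log (((n + 2).factorial : ℝ))) ^ α /
            ((Real.log (((n + 2).factorial : ℝ))) ^ β + r ^ 2) ^ (μ + 1)) =
        R ^ α / (r^2) ^ (μ+1) * ∑' n, MathieuAux.G α β μ (MathieuAux.L n / R) := by
    rw [← tsum_mul_left]
    congr 1
    ext n
    have hL := MathieuAux.L_pos n
    change (MathieuAux.L n) ^ α / ((MathieuAux.L n) ^ β + r ^ 2) ^ (μ + 1) = _
    generalize MathieuAux.L n = x at hL
    unfold MathieuAux.G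
    rw [Real.div_rpow hL.le hRpos.le, Real.div_rpow hL.le hRpos.le, hRβ]
    have : x ^ β + r ^ 2 = r^2 * (x ^ β / r^2 + 1) := by field_simp
    rw [this, Real.mul_rpow (by positivity) (by positivity)]
    have : R ^ α ≠ 0 := by positivity
    field_simp
  rw [hsum]
  have hpow : r ^ (2 * (α + 1) / β - 2 * (μ + 1)) = R ^ α * R / (r^2) ^ (μ+1) := by
    rw [Real.rpow_sub hr0]
    congr 1
    · rw [hRdef, ← Real.rpow_mul hr0.le, ← Real.rpow_add hr0]
      congr 1; ring
    · rw [← Real.rpow_natCast r 2, ← Real.rpow_mul hr0.le]; norm_num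
  have hlogR : Real.log R = 2/β * Real.log r := Real.log_rpow hr0 _
  rw [hpow]
  simp only [Function.comp]
  rw [← hRdef, hlogR]
  have : R ^ α ≠ 0 := by positivity
  have : (r^2) ^ (μ+1) ≠ 0 := by positivity
  generalize (∑' n, MathieuAux.G α β μ (MathieuAux.L n / R)) = S
  field_simp
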